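/- arXiv:2212.07694 — 5 statements merged into one kernel-verified Lean document; each statement's English description precedes it below -/
import Mathlib

section
/- Let κ₁, κ₂ > 0 and γ ≥ 0 with κ₂ ≠ γ and (κ₁ − γ)/(κ₂ − γ) > 0, and set B = √((κ₁ − γ)/(κ₂ − γ)). Then the symmetric real 2×2 matrix [[3κ₁ + γB², 2γB], [2γB, 3κ₂B² + γ]] has eigenvalues exactly β₁ = 3(γ² − κ₁κ₂)/(γ − κ₂) and β₃ = (−γ² + 2γ(κ₁ + κ₂) − 3κ₁κ₂)/(γ − κ₂); that is, its trace equals β₁ + β₃ and its determinant equals β₁β₃. -/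
/-!
The condition on `B` says that `κ₁ + γ * B ^ 2 = κ₂ * B ^ 2 + γ`: both components of `(φ, Bφ)` see
the same cubic coefficient `p`. Under it the block equals `3 * p • 1 - 2 * γ • w wᵀ` with
`w = (B, -1)`, so its eigenvalues are `3 * p`, on `(1, B) ⟂ w`, and `3 * p - 2 * γ * (B ^ 2 + 1)`,
on `w` itself.
-/

open Matrix

section RankOnePerturbation

variable {n R : Type*} [Fintype n] [DecidableEq n]

theorem trace_smul_one_add_vecMulVec [Semiring R] (c : R) (u v : n → R) :
    trace (c • (1 : Matrix n n R) + vecMulVec u v) = Fintype.card n * c + u ⬝ᵥ v := by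
  rw [trace_add, trace_smul, trace_one, trace_vecMulVec, smul_eq_mul, Nat.cast_comm]

theorem det_smul_one_add_vecMulVec [Nonempty n] [CommRing R] (c : R) (u v : n → R) :
    det (c • (1 : Matrix n n R) + vecMulVec u v) = c ^ (Fintype.card n - 1) * (c + u ⬝ᵥ v) := by
  calc det (c • (1 : Matrix n n R) + vecMulVec u v)
      = (vecMulVec (-u) v).charpoly.eval c := by
        rw [eval_charpoly, neg_vecMulVec, sub_neg_eq_add, scalar_apply, smul_one_eq_diagonal]
    _ = c ^ Fintype.card n + u ⬝ᵥ v * c ^ (Fintype.card n - 1) := by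
        rw [charpoly_vecMulVec, neg_dotProduct]
        simp
    _ = c ^ (Fintype.card n - 1) * (c + u ⬝ᵥ v) := by
        rw [mul_add, pow_sub_one_mul Fintype.card_ne_zero, mul_comm (u ⬝ᵥ v)]

end RankOnePerturbation

/-- The upper-left `2 × 2` block of the matrix `S` in the linearization of the cubic NLS system
around the standing wave `(φ, Bφ)`. -/
def upperBlock {R : Type*} [Semiring R] (κ₁ κ₂ γ B : R) : Matrix (Fin 2) (Fin 2) R :=
  !![3 * κ₁ + γ * B ^ 2, 2 * γ * B; 2 * γ * B, 3 * κ₂ * B ^ 2 + γ]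

theorem upperBlock_eq_smul_one_add_vecMulVec {R : Type*} [CommRing R] {κ₁ κ₂ γ B : R}
    (h : κ₁ + γ * B ^ 2 = κ₂ * B ^ 2 + γ) :
    upperBlock κ₁ κ₂ γ B =
      (3 * (κ₁ + γ * B ^ 2)) • 1 + vecMulVec ![-(2 * γ * B), 2 * γ] ![B, -1] := by
  have h₀₀ : 3 * κ₁ + γ * B ^ 2 = 3 * (κ₁ + γ * B ^ 2) + -(2 * γ * B) * B := by ring
  have h₁₁ : 3 * κ₂ * B ^ 2 + γ = 3 * (κ₁ + γ * B ^ 2) + -(2 * γ) := by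
    linear_combination (-3) * h
  ext i j
  fin_cases i <;> fin_cases j
  · simpa [upperBlock] using h₀₀
  · simp [upperBlock]
  · simp [upperBlock]
  · simpa [upperBlock] using h₁₁

section Eigenvalues

variable {K : Type*} [Field K] {κ₁ κ₂ γ B : K}

theorem add_mul_sq_eq_of_sq_eq_div (hne : κ₂ ≠ γ) (hB : B ^ 2 = (κ₁ - γ) / (κ₂ - γ)) :
    κ₁ + γ * B ^ 2 = κ₂ * B ^ 2 + γ := by
  rw [eq_div_iff (sub_ne_zero.mpr hne)] at hB
  linear_combination -hB

theorem three_mul_add_mul_sq_eq_div (hne : κ₂ ≠ γ) (h : κ₁ + γ * B ^ 2 = κ₂ * B ^ 2 + γ) :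
    3 * (κ₁ + γ * B ^ 2) = 3 * (γ ^ 2 - κ₁ * κ₂) / (γ - κ₂) := by
  rw [eq_div_iff (sub_ne_zero.mpr hne.symm)]
  linear_combination 3 * γ * h

theorem three_mul_add_mul_sq_sub_eq_div (hne : κ₂ ≠ γ) (h : κ₁ + γ * B ^ 2 = κ₂ * B ^ 2 + γ) :
    3 * (κ₁ + γ * B ^ 2) - 2 * γ * (B ^ 2 + 1) =
      (-γ ^ 2 + 2 * γ * (κ₁ + κ₂) - 3 * κ₁ * κ₂) / (γ - κ₂) := by
  rw [eq_div_iff (sub_ne_zero.mpr hne.symm)]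
  linear_combination γ * h

theorem upper_block_eigenvalues_general {β₁ β₃ : K}
    (hne : κ₂ ≠ γ) (hB : B ^ 2 = (κ₁ - γ) / (κ₂ - γ))
    (hβ₁ : β₁ = 3 * (γ ^ 2 - κ₁ * κ₂) / (γ - κ₂))
    (hβ₃ : β₃ = (-γ ^ 2 + 2 * γ * (κ₁ + κ₂) - 3 * κ₁ * κ₂) / (γ - κ₂)) :
    trace (upperBlock κ₁ κ₂ γ B) = β₁ + β₃ ∧ det (upperBlock κ₁ κ₂ γ B) = β₁ * β₃ ∧
      ∀ μ : K, det (upperBlock κ₁ κ₂ γ B - μ • 1) = 0 ↔ μ = β₁ ∨ μ = β₃ := by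
  have hbal := add_mul_sq_eq_of_sq_eq_div hne hB
  set u : Fin 2 → K := ![-(2 * γ * B), 2 * γ]
  set w : Fin 2 → K := ![B, -1]
  have hblock : upperBlock κ₁ κ₂ γ B = β₁ • 1 + vecMulVec u w := by
    rw [hβ₁, ← three_mul_add_mul_sq_eq_div hne hbal, upperBlock_eq_smul_one_add_vecMulVec hbal]
  have hdot : β₁ + u ⬝ᵥ w = β₃ := by
    rw [hβ₁, hβ₃, ← three_mul_add_mul_sq_eq_div hne hbal,
      ← three_mul_add_mul_sq_sub_eq_div hne hbal, vec2_dotProduct']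
    ring
  have hchar (μ : K) : det (upperBlock κ₁ κ₂ γ B - μ • 1) = (β₁ - μ) * (β₃ - μ) := by
    rw [hblock, add_sub_right_comm, ← sub_smul, det_smul_one_add_vecMulVec, Fintype.card_fin,
      pow_one, ← hdot, add_sub_right_comm]
  refine ⟨?_, by simpa using hchar 0, fun μ ↦ ?_⟩
  · rw [hblock, trace_smul_one_add_vecMulVec, Fintype.card_fin, ← hdot]
    ring
  · rw [hchar, mul_eq_zero, sub_eq_zero, sub_eq_zero, eq_comm, eq_comm (a := β₃)]

end Eigenvalues

/-- the upper-left block `[[3κ₁+γB², 2γB],[2γB, 3κ₂B²+γ]]` has eigenvalues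
exactly β₁ and β₃: its trace is β₁+β₃ and its determinant is β₁β₃. -/
theorem upper_block_eigenvalues
    (κ₁ κ₂ γ : ℝ) (hκ₁ : 0 < κ₁) (hκ₂ : 0 < κ₂) (hγ : 0 ≤ γ)
    (hne : κ₂ ≠ γ) (hratio : 0 < (κ₁ - γ) / (κ₂ - γ))
    (B : ℝ) (hB : B = Real.sqrt ((κ₁ - γ) / (κ₂ - γ)))
    (β₁ β₃ : ℝ)
    (hβ₁ : β₁ = 3 * (γ ^ 2 - κ₁ * κ₂) / (γ - κ₂))
    (hβ₃ : β₃ = (-γ ^ 2 + 2 * γ * (κ₁ + κ₂) - 3 * κ₁ * κ₂) / (γ - κ₂))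
    (M : Matrix (Fin 2) (Fin 2) ℝ)
    (hM : M = !![3 * κ₁ + γ * B ^ 2, 2 * γ * B; 2 * γ * B, 3 * κ₂ * B ^ 2 + γ]) :
    Matrix.trace M = β₁ + β₃
    ∧ Matrix.det M = β₁ * β₃
    ∧ ∀ μ : ℝ, Matrix.det (M - μ • (1 : Matrix (Fin 2) (Fin 2) ℝ)) = 0 ↔ (μ = β₁ ∨ μ = β₃) := by
  subst hM
  exact upper_block_eigenvalues_general hne (by rw [hB, Real.sq_sqrt hratio.le]) hβ₁ hβ₃
end

section
/- Let L > 0, c > 0, and ω > 2π²/L². Then there exists a twice continuously differentiable, nonconstant, L-periodic function φ : ℝ → ℝ that is even and strictly positive on ℝ and satisfies the ordinary differential equation −φ''(x) + ω φ(x) − c φ(x)³ = 0 for all x ∈ ℝ. -/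
/-!
The dnoidal waves `x ↦ √(2 / c) * b * dn (b * x)` solve `φ'' = b² (2 - m) φ - c φ³` and have
period `2 K(m) / b`. Taking `b = 2 K(m) / L` to obtain period `L`, one is left with the equation
`(2 - m) (2 K(m))² = ω L²` for the parameter `m ∈ (0, 1)`. The left side is continuous in `m`,
equals `2 π²` at `m = 0` and blows up as `m → 1`, so the intermediate value theorem solves the
equation for every `ω > 2 π² / L²`.
-/

open Filter Real Set Topology

theorem surjective_of_le_deriv {f : ℝ → ℝ} {C : ℝ} (hf : Differentiable ℝ f) (hC : 0 < C)
    (hderiv : ∀ x, C ≤ deriv f x) : Function.Surjective f := by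
  have hgrowth : ∀ ⦃x y⦄, x ≤ y → C * (y - x) ≤ f y - f x :=
    mul_sub_le_image_sub_of_le_deriv hf hderiv
  refine hf.continuous.surjective ?_ ?_
  · have hline : Tendsto (fun x => f 0 + C * x) atTop atTop :=
      tendsto_atTop_add_const_left _ _ (tendsto_id.const_mul_atTop hC)
    refine tendsto_atTop_mono' _ ?_ hline
    filter_upwards [eventually_ge_atTop 0] with x hx
    linarith [hgrowth hx]
  · have hline : Tendsto (fun x => f 0 + C * x) atBot atBot :=
      tendsto_atBot_add_const_left _ _ (tendsto_id.const_mul_atBot hC)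
    refine tendsto_atBot_mono' _ ?_ hline
    filter_upwards [eventually_le_atBot 0] with x hx
    linarith [hgrowth hx]

section LegendreDelta

/-- Legendre's delta amplitude `Δ(t)`, the square root in the elliptic integrals. Here and
below `m` is the parameter `k²`, not the modulus `k`. -/
noncomputable def legendreDelta (m t : ℝ) : ℝ := √(1 - m * sin t ^ 2)

variable {m : ℝ}

theorem one_sub_mul_sin_sq_pos (hm : m < 1) (t : ℝ) : 0 < 1 - m * sin t ^ 2 := by
  rcases le_total m 0 with h | h <;> nlinarith [sin_sq_le_one t, sq_nonneg (sin t)]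

theorem legendreDelta_pos (hm : m < 1) (t : ℝ) : 0 < legendreDelta m t :=
  sqrt_pos.2 (one_sub_mul_sin_sq_pos hm t)

theorem sq_legendreDelta (hm : m < 1) (t : ℝ) : legendreDelta m t ^ 2 = 1 - m * sin t ^ 2 :=
  sq_sqrt (one_sub_mul_sin_sq_pos hm t).le

theorem legendreDelta_neg (m t : ℝ) : legendreDelta m (-t) = legendreDelta m t := by
  simp [legendreDelta]

theorem legendreDelta_periodic (m : ℝ) : Function.Periodic (legendreDelta m) π := by
  intro t
  simp [legendreDelta, sin_add_pi]

theorem legendreDelta_le (m t : ℝ) : legendreDelta m t ≤ √(1 + |m|) := by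
  refine sqrt_le_sqrt ?_
  nlinarith [neg_abs_le m, abs_nonneg m, sin_sq_le_one t, sq_nonneg (sin t)]

theorem contDiff_legendreDelta (hm : m < 1) {n : WithTop ℕ∞} : ContDiff ℝ n (legendreDelta m) :=
  ContDiff.sqrt (by fun_prop) fun t => (one_sub_mul_sin_sq_pos hm t).ne'

theorem continuous_inv_legendreDelta (hm : m < 1) : Continuous fun t => (legendreDelta m t)⁻¹ :=
  (contDiff_legendreDelta (n := 0) hm).continuous.inv₀ fun t => (legendreDelta_pos hm t).ne'

theorem hasDerivAt_legendreDelta (hm : m < 1) (t : ℝ) :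
    HasDerivAt (legendreDelta m) (-m * sin t * cos t / legendreDelta m t) t := by
  have h := ((((hasDerivAt_sin t).pow 2).const_mul m).const_sub 1).sqrt
    (one_sub_mul_sin_sq_pos hm t).ne'
  refine h.congr_deriv ?_
  change -(m * (2 * sin t ^ 1 * cos t)) / (2 * legendreDelta m t) = _
  ring

end LegendreDelta

section EllipticIntegral

/-- The incomplete elliptic integral of the first kind `F(x | m)`,
whose inverse is the Jacobi amplitude. -/
noncomputable def ellipticF (m x : ℝ) : ℝ := ∫ t in (0)..x, (legendreDelta m t)⁻¹

/-- The complete elliptic integral of the first kind `K(m)`, the quarter period of `sn` and `cn`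
and half the period of `dn`. -/
noncomputable def ellipticK (m : ℝ) : ℝ := ellipticF m (π / 2)

variable {m : ℝ}

theorem hasDerivAt_ellipticF (hm : m < 1) (x : ℝ) :
    HasDerivAt (ellipticF m) (legendreDelta m x)⁻¹ x :=
  ((continuous_inv_legendreDelta hm).integral_hasStrictDerivAt 0 x).hasDerivAt

theorem ellipticF_sub (hm : m < 1) (x y : ℝ) :
    ellipticF m y - ellipticF m x = ∫ t in x..y, (legendreDelta m t)⁻¹ :=
  intervalIntegral.integral_interval_sub_left
    ((continuous_inv_legendreDelta hm).intervalIntegrable _ _)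
    ((continuous_inv_legendreDelta hm).intervalIntegrable _ _)

theorem strictMono_ellipticF (hm : m < 1) : StrictMono (ellipticF m) :=
  strictMono_of_hasDerivAt_pos (hasDerivAt_ellipticF hm)
    fun x => inv_pos.2 (legendreDelta_pos hm x)

theorem surjective_ellipticF (hm : m < 1) : Function.Surjective (ellipticF m) := by
  refine surjective_of_le_deriv (C := (√(1 + |m|))⁻¹)
    (fun x => (hasDerivAt_ellipticF hm x).differentiableAt) (by positivity) fun x => ?_
  rw [(hasDerivAt_ellipticF hm x).deriv]
  exact inv_anti₀ (legendreDelta_pos hm x) (legendreDelta_le m x)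

@[simp]
theorem ellipticF_zero_right (m : ℝ) : ellipticF m 0 = 0 :=
  intervalIntegral.integral_same

theorem ellipticF_neg (m x : ℝ) : ellipticF m (-x) = -ellipticF m x := by
  have h := intervalIntegral.integral_comp_neg (a := 0) (b := x) fun t => (legendreDelta m t)⁻¹
  simp only [legendreDelta_neg, neg_zero] at h
  rw [ellipticF, ellipticF, h, intervalIntegral.integral_symm]

theorem ellipticF_add_pi (hm : m < 1) (x : ℝ) :
    ellipticF m (x + π) = ellipticF m x + 2 * ellipticK m := by
  have hshift := ((legendreDelta_periodic m).comp Inv.inv).intervalIntegral_add_eq x (-(π / 2))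
  simp only [Function.comp_apply, ← ellipticF_sub hm] at hshift
  rw [show -(π / 2) + π = π / 2 by ring, ellipticF_neg, ← ellipticK] at hshift
  linarith

theorem ellipticK_pos (hm : m < 1) : 0 < ellipticK m := by
  simpa [ellipticK] using strictMono_ellipticF hm pi_div_two_pos

@[simp]
theorem ellipticK_zero : ellipticK 0 = π / 2 := by
  simp [ellipticK, ellipticF, legendreDelta]

theorem continuousOn_ellipticK : ContinuousOn ellipticK (Iio 1) := by
  rw [continuousOn_iff_continuous_domRestrict]
  refine intervalIntegral.continuous_parametric_intervalIntegral_of_continuous'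
    (f := fun (m : Iio (1 : ℝ)) t => (legendreDelta m t)⁻¹) ?_ 0 (π / 2)
  refine Continuous.inv₀ (by unfold legendreDelta; fun_prop) ?_
  exact fun ⟨m, t⟩ => (legendreDelta_pos m.2 t).ne'

theorem legendreDelta_le_add (hm : m < 1) {t : ℝ} (ht : t ∈ Icc 0 (π / 2)) :
    legendreDelta m t ≤ √(1 - m) + (π / 2 - t) := by
  have hcos_nonneg : 0 ≤ cos t := cos_nonneg_of_mem_Icc ⟨by linarith [ht.1, pi_pos], ht.2⟩
  have hcos_le : cos t ≤ π / 2 - t := by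
    rw [← sin_pi_div_two_sub]
    exact sin_le (by linarith [ht.2])
  have hradicand : 1 - m * sin t ^ 2 = √(1 - m) ^ 2 * sin t ^ 2 + cos t ^ 2 := by
    rw [sq_sqrt (by linarith), cos_sq']
    ring
  refine sqrt_le_iff.2 ⟨by linarith [sqrt_nonneg (1 - m), ht.2], ?_⟩
  calc 1 - m * sin t ^ 2
      ≤ √(1 - m) ^ 2 * 1 + (π / 2 - t) ^ 2 := by
        rw [hradicand]
        gcongr
        exact sin_sq_le_one t
    _ ≤ (√(1 - m) + (π / 2 - t)) ^ 2 := by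
        nlinarith [mul_nonneg (sqrt_nonneg (1 - m)) (sub_nonneg.2 ht.2)]

theorem log_le_ellipticK (hm : m < 1) : log (1 + π / 2 / √(1 - m)) ≤ ellipticK m := by
  have hsqrt : 0 < √(1 - m) := sqrt_pos.2 (sub_pos.2 hm)
  have hlog : log (1 + π / 2 / √(1 - m)) = ∫ t in (0)..(π / 2), (√(1 - m) + (π / 2 - t))⁻¹ := by
    have h := intervalIntegral.integral_comp_sub_left (a := 0) (b := π / 2)
      (fun x : ℝ => x⁻¹) (√(1 - m) + π / 2)
    simp only [add_sub_assoc, sub_self, sub_zero, add_zero] at h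
    rw [h, integral_inv_of_pos hsqrt (by positivity), add_div, div_self hsqrt.ne']
  rw [hlog]
  refine intervalIntegral.integral_mono_on pi_div_two_pos.le ?_
    ((continuous_inv_legendreDelta hm).intervalIntegrable _ _)
    fun t ht => inv_anti₀ (legendreDelta_pos hm t) (legendreDelta_le_add hm ht)
  refine (ContinuousOn.inv₀ (by fun_prop) fun t ht => ?_).intervalIntegrable
  rw [uIcc_of_le pi_div_two_pos.le] at ht
  linarith [ht.2]

theorem tendsto_ellipticK_atTop : Tendsto ellipticK (𝓝[<] 1) atTop := by
  have hsqrt : Tendsto (fun m : ℝ => √(1 - m)) (𝓝[<] 1) (𝓝[>] 0) := by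
    refine tendsto_nhdsWithin_iff.2 ⟨?_, ?_⟩
    · have hcont : Continuous fun m : ℝ => √(1 - m) := by fun_prop
      simpa using (hcont.tendsto 1).mono_left nhdsWithin_le_nhds
    · filter_upwards [self_mem_nhdsWithin] with m hm
      exact sqrt_pos.2 (sub_pos.2 hm)
  have hlog : Tendsto (fun m : ℝ => log (1 + π / 2 / √(1 - m))) (𝓝[<] 1) atTop :=
    tendsto_log_atTop.comp <| tendsto_atTop_add_const_left _ _ <|
      (tendsto_inv_nhdsGT_zero.comp hsqrt).const_mul_atTop pi_div_two_pos
  refine tendsto_atTop_mono' _ ?_ hlog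
  filter_upwards [self_mem_nhdsWithin] with m hm using log_le_ellipticK hm

theorem exists_two_sub_mul_sq_ellipticK_eq {T : ℝ} (hT : 2 * π ^ 2 < T) :
    ∃ m ∈ Ioo (0 : ℝ) 1, (2 - m) * (2 * ellipticK m) ^ 2 = T := by
  let g : ℝ → ℝ := fun m => (2 - m) * (2 * ellipticK m) ^ 2
  have hg_zero : g 0 = 2 * π ^ 2 := by
    simp only [g, ellipticK_zero]
    ring
  have hg_cont : ContinuousOn g (Ico 0 1) := by
    have hK := continuousOn_ellipticK.mono (Ico_subset_Iio_self (a := (0 : ℝ)))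
    fun_prop
  have hg_top : Tendsto g (𝓝[<] 1) atTop := by
    have hfactor : Tendsto (fun m : ℝ => 2 - m) (𝓝[<] 1) (𝓝 1) := by
      have hcont : Continuous fun m : ℝ => 2 - m := by fun_prop
      convert (hcont.tendsto 1).mono_left nhdsWithin_le_nhds using 2
      norm_num
    exact hfactor.pos_mul_atTop one_pos <|
      (tendsto_pow_atTop two_ne_zero).comp (tendsto_ellipticK_atTop.const_mul_atTop two_pos)
  obtain ⟨m, ⟨hm0, hm1⟩, hm⟩ := isPreconnected_Ico.intermediate_value_Ici
    (left_mem_Ico.2 one_pos) (le_principal_iff.2 (Ico_mem_nhdsLT one_pos)) hg_cont hg_top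
    (hg_zero.trans_lt hT).le
  refine ⟨m, ⟨hm0.lt_of_ne ?_, hm1⟩, hm⟩
  rintro rfl
  exact hT.ne (hg_zero.symm.trans hm)

end EllipticIntegral

section JacobiFunctions

open scoped ContDiff

/-- The Jacobi amplitude `am`, the inverse of the incomplete elliptic integral of the first kind;
meaningful for `m < 1`, where that integral is a bijection of `ℝ`. -/
noncomputable def jacobiAm (m : ℝ) : ℝ → ℝ := Function.invFun (ellipticF m)

/-- The Jacobi elliptic function `sn`, the sine of the amplitude. -/
noncomputable def jacobiSn (m u : ℝ) : ℝ := sin (jacobiAm m u)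

/-- The Jacobi elliptic function `cn`, the cosine of the amplitude. -/
noncomputable def jacobiCn (m u : ℝ) : ℝ := cos (jacobiAm m u)

/-- The Jacobi elliptic function `dn`, the profile of the dnoidal wave; it is defined from the
delta amplitude, and is the derivative of `am` (`hasDerivAt_jacobiAm`). -/
noncomputable def jacobiDn (m u : ℝ) : ℝ := legendreDelta m (jacobiAm m u)

variable {m : ℝ}

theorem ellipticF_jacobiAm (hm : m < 1) (u : ℝ) : ellipticF m (jacobiAm m u) = u :=
  Function.rightInverse_invFun (surjective_ellipticF hm) u

theorem jacobiAm_ellipticF (hm : m < 1) (x : ℝ) : jacobiAm m (ellipticF m x) = x :=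
  Function.leftInverse_invFun (strictMono_ellipticF hm).injective x

theorem jacobiAm_neg (hm : m < 1) (u : ℝ) : jacobiAm m (-u) = -jacobiAm m u := by
  apply (strictMono_ellipticF hm).injective
  rw [ellipticF_neg, ellipticF_jacobiAm hm, ellipticF_jacobiAm hm]

theorem jacobiAm_add_two_mul_ellipticK (hm : m < 1) (u : ℝ) :
    jacobiAm m (u + 2 * ellipticK m) = jacobiAm m u + π := by
  apply (strictMono_ellipticF hm).injective
  rw [ellipticF_add_pi hm, ellipticF_jacobiAm hm, ellipticF_jacobiAm hm]

theorem continuous_jacobiAm (hm : m < 1) : Continuous (jacobiAm m) := by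
  have hmono : Monotone (jacobiAm m) := fun u v huv => by
    rwa [← (strictMono_ellipticF hm).le_iff_le, ellipticF_jacobiAm hm, ellipticF_jacobiAm hm]
  exact hmono.continuous_of_surjective fun x => ⟨ellipticF m x, jacobiAm_ellipticF hm x⟩

theorem hasDerivAt_jacobiAm (hm : m < 1) (u : ℝ) : HasDerivAt (jacobiAm m) (jacobiDn m u) u := by
  simpa [jacobiDn] using HasDerivAt.of_local_left_inverse
    (continuous_jacobiAm hm).continuousAt (hasDerivAt_ellipticF hm _)
    (inv_ne_zero (legendreDelta_pos hm _).ne') (.of_forall (ellipticF_jacobiAm hm))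

theorem contDiff_jacobiAm (hm : m < 1) : ContDiff ℝ ∞ (jacobiAm m) := by
  refine contDiff_infty.2 fun n => ?_
  induction n with
  | zero => exact contDiff_zero.2 (continuous_jacobiAm hm)
  | succ n ih =>
    have hderiv : deriv (jacobiAm m) = legendreDelta m ∘ jacobiAm m :=
      funext fun u => (hasDerivAt_jacobiAm hm u).deriv
    push_cast
    refine contDiff_succ_iff_deriv.2
      ⟨fun u => (hasDerivAt_jacobiAm hm u).differentiableAt, by simp, ?_⟩
    exact hderiv ▸ (contDiff_legendreDelta hm).comp ih

theorem hasDerivAt_jacobiSn (hm : m < 1) (u : ℝ) :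
    HasDerivAt (jacobiSn m) (jacobiCn m u * jacobiDn m u) u :=
  (hasDerivAt_jacobiAm hm u).sin

theorem hasDerivAt_jacobiCn (hm : m < 1) (u : ℝ) :
    HasDerivAt (jacobiCn m) (-jacobiSn m u * jacobiDn m u) u :=
  (hasDerivAt_jacobiAm hm u).cos

theorem jacobiDn_pos (hm : m < 1) (u : ℝ) : 0 < jacobiDn m u :=
  legendreDelta_pos hm _

theorem hasDerivAt_jacobiDn (hm : m < 1) (u : ℝ) :
    HasDerivAt (jacobiDn m) (-m * (jacobiSn m u * jacobiCn m u)) u := by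
  refine ((hasDerivAt_legendreDelta hm _).comp u (hasDerivAt_jacobiAm hm u)).congr_deriv ?_
  rw [← jacobiDn, div_mul_cancel₀ _ (jacobiDn_pos hm u).ne', mul_assoc]
  rfl

theorem contDiff_jacobiDn (hm : m < 1) : ContDiff ℝ ∞ (jacobiDn m) :=
  (contDiff_legendreDelta hm).comp (contDiff_jacobiAm hm)

theorem jacobiSn_sq_add_jacobiCn_sq (m u : ℝ) : jacobiSn m u ^ 2 + jacobiCn m u ^ 2 = 1 :=
  sin_sq_add_cos_sq _

theorem jacobiDn_sq (hm : m < 1) (u : ℝ) : jacobiDn m u ^ 2 = 1 - m * jacobiSn m u ^ 2 :=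
  sq_legendreDelta hm _

theorem deriv_deriv_jacobiDn (hm : m < 1) (u : ℝ) :
    deriv (deriv (jacobiDn m)) u = (2 - m) * jacobiDn m u - 2 * jacobiDn m u ^ 3 := by
  have hderiv : deriv (jacobiDn m) = fun v => -m * (jacobiSn m v * jacobiCn m v) :=
    funext fun v => (hasDerivAt_jacobiDn hm v).deriv
  have hderiv₂ := ((hasDerivAt_jacobiSn hm u).mul (hasDerivAt_jacobiCn hm u)).const_mul (-m)
  rw [hderiv]
  refine hderiv₂.deriv.trans ?_
  linear_combination 2 * jacobiDn m u * jacobiDn_sq hm u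
    - m * jacobiDn m u * jacobiSn_sq_add_jacobiCn_sq m u

theorem jacobiDn_neg (hm : m < 1) (u : ℝ) : jacobiDn m (-u) = jacobiDn m u := by
  rw [jacobiDn, jacobiAm_neg hm, legendreDelta_neg, ← jacobiDn]

theorem jacobiDn_periodic (hm : m < 1) : Function.Periodic (jacobiDn m) (2 * ellipticK m) := by
  intro u
  rw [jacobiDn, jacobiAm_add_two_mul_ellipticK hm, legendreDelta_periodic, ← jacobiDn]

theorem jacobiDn_zero (hm : m < 1) : jacobiDn m 0 = 1 := by
  have hAm : jacobiAm m 0 = 0 := by simpa using jacobiAm_ellipticF hm 0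
  simp [jacobiDn, legendreDelta, hAm]

theorem jacobiDn_ellipticK (hm : m < 1) : jacobiDn m (ellipticK m) = √(1 - m) := by
  rw [jacobiDn, ellipticK, jacobiAm_ellipticF hm]
  simp [legendreDelta]

end JacobiFunctions

section DnoidalWave

open scoped ContDiff

/-- The dnoidal wave of wave number `b`. The amplitude `√(2 / c) * b` makes the cubic term of its
equation `c φ³`; the frequency is then `b² (2 - m)`. -/
noncomputable def dnoidalWave (c b m x : ℝ) : ℝ := √(2 / c) * b * jacobiDn m (b * x)

variable {c b m : ℝ}

theorem contDiff_dnoidalWave (hm : m < 1) (c b : ℝ) : ContDiff ℝ ∞ (dnoidalWave c b m) :=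
  contDiff_const.mul ((contDiff_jacobiDn hm).comp (contDiff_const.mul contDiff_id))

theorem dnoidalWave_pos (hm : m < 1) (hc : 0 < c) (hb : 0 < b) (x : ℝ) :
    0 < dnoidalWave c b m x := by
  have := jacobiDn_pos hm (b * x)
  unfold dnoidalWave
  positivity

theorem dnoidalWave_neg (hm : m < 1) (c b x : ℝ) :
    dnoidalWave c b m (-x) = dnoidalWave c b m x := by
  rw [dnoidalWave, mul_neg, jacobiDn_neg hm, ← dnoidalWave]

theorem dnoidalWave_periodic (hm : m < 1) (c b : ℝ) :
    Function.Periodic (dnoidalWave c b m) (2 * ellipticK m / b) :=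
  div_eq_inv_mul (2 * ellipticK m) b ▸
    ((jacobiDn_periodic hm).const_mul b).comp (√(2 / c) * b * ·)

theorem dnoidalWave_zero_ne_dnoidalWave_ellipticK_div (hm : m < 1) (hm0 : m ≠ 0)
    (hc : 0 < c) (hb : b ≠ 0) :
    dnoidalWave c b m 0 ≠ dnoidalWave c b m (ellipticK m / b) := by
  have hsqrt : √(1 - m) ≠ 1 := by simpa using hm0
  rw [dnoidalWave, dnoidalWave, mul_zero, mul_div_cancel₀ _ hb, jacobiDn_zero hm,
    jacobiDn_ellipticK hm]
  exact fun h => hsqrt (mul_left_cancel₀ (by positivity) h).symm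

theorem deriv_deriv_dnoidalWave (hm : m < 1) (hc : 0 < c) (b x : ℝ) :
    deriv (deriv (dnoidalWave c b m)) x =
      b ^ 2 * (2 - m) * dnoidalWave c b m x - c * dnoidalWave c b m x ^ 3 := by
  have hderiv : deriv (dnoidalWave c b m) =
      fun y => √(2 / c) * b * (b * deriv (jacobiDn m) (b * y)) := by
    funext y
    unfold dnoidalWave
    rw [deriv_const_mul_field, deriv_comp_mul_left, smul_eq_mul]
  have hsqrt : c * √(2 / c) ^ 2 = 2 := by
    rw [sq_sqrt (by positivity), mul_div_cancel₀ _ hc.ne']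
  rw [hderiv]
  simp only [deriv_const_mul_field, deriv_comp_mul_left, smul_eq_mul, deriv_deriv_jacobiDn hm,
    dnoidalWave]
  linear_combination √(2 / c) * b ^ 3 * jacobiDn m (b * x) ^ 3 * hsqrt

end DnoidalWave

/-- existence of dnoidal-type waves: for `L > 0`, `c > 0` and
`ω > 2π²/L²` there is a nonconstant, even, strictly positive, `C²`, `L`-periodic
solution of `−φ'' + ωφ − cφ³ = 0`. -/
theorem exists_dnoidal_wave
    (L c ω : ℝ) (hL : 0 < L) (hc : 0 < c) (hω : 2 * Real.pi ^ 2 / L ^ 2 < ω) :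
    ∃ φ : ℝ → ℝ,
      ContDiff ℝ 2 φ
      ∧ (¬ ∃ a : ℝ, ∀ x : ℝ, φ x = a)
      ∧ Function.Periodic φ L
      ∧ (∀ x : ℝ, φ (-x) = φ x)
      ∧ (∀ x : ℝ, 0 < φ x)
      ∧ (∀ x : ℝ, -deriv (deriv φ) x + ω * φ x - c * (φ x) ^ 3 = 0) := by
  obtain ⟨m, ⟨hm0, hm⟩, hmT⟩ : ∃ m ∈ Ioo (0 : ℝ) 1, (2 - m) * (2 * ellipticK m) ^ 2 = ω * L ^ 2 :=
    exists_two_sub_mul_sq_ellipticK_eq ((div_lt_iff₀ (by positivity)).1 hω)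
  have hK : 0 < 2 * ellipticK m := mul_pos two_pos (ellipticK_pos hm)
  obtain ⟨b, hb, hbL⟩ : ∃ b, 0 < b ∧ 2 * ellipticK m / b = L :=
    ⟨2 * ellipticK m / L, div_pos hK hL, div_div_cancel₀ hK.ne'⟩
  have hbω : b ^ 2 * (2 - m) = ω := by
    have hbK : b * L = 2 * ellipticK m := by rw [← hbL, mul_div_cancel₀ _ hb.ne']
    refine mul_right_cancel₀ (pow_ne_zero 2 hL.ne') ?_
    rw [← hmT, ← hbK]
    ring
  refine ⟨dnoidalWave c b m, contDiff_infty.1 (contDiff_dnoidalWave hm c b) 2, ?_,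
    hbL ▸ dnoidalWave_periodic hm c b, dnoidalWave_neg hm c b, dnoidalWave_pos hm hc hb,
    fun x => ?_⟩
  · rintro ⟨a, ha⟩
    exact dnoidalWave_zero_ne_dnoidalWave_ellipticK_div hm hm0.ne' hc hb.ne'
      ((ha _).trans (ha _).symm)
  · rw [deriv_deriv_dnoidalWave hm hc, hbω]
    ring
end

section
/- Let L > 0, c > 0, and ω > 0. Then there exists a twice continuously differentiable, nonconstant, L-periodic function ψ : ℝ → ℝ that is odd and satisfies the ordinary differential equation −ψ''(x) + ω ψ(x) − c ψ(x)³ = 0 for all x ∈ ℝ. -/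
/-!
Look for `ψ = A sin φ`, where the amplitude `φ` solves `φ' = s √(1 + q² sin² φ)`. Differentiating
twice gives `ψ'' = s² (q² - 1) ψ - 2 (s q / A)² ψ³`, so the equation asks for `ω = s² (q² - 1)` and
`c A² = 2 s² q²`. The amplitude gains `2π` over the length `K(q) / s`, where
`K(q) = ∫ θ in 0..2π, 1 / √(1 + q² sin² θ)`; for this length to be `L` one needs `s = K(q) / L`, and
the remaining condition is `(q² - 1) K(q)² = ω L²`. Its left side is continuous in `q`, equals
`-(2π)²` at `q = 0`, and is unbounded since `q K(q) ≥ log (1 + 2πq)`. Hence it can be solved with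
`q ≠ 0` as soon as `-(2π)² < ω L²`, and in general after replacing `L` by `L / n` with `n` large.
-/

open Filter Set intervalIntegral
open scoped Topology Real

namespace Cnoidal

section AutonomousEquation

lemma odd_integral_of_even {g : ℝ → ℝ} (hg : g.Even) :
    Function.Odd fun y => ∫ t in (0 : ℝ)..y, g t := by
  intro y
  have h := integral_comp_neg (a := 0) (b := y) g
  simp only [hg.eq, neg_zero] at h
  exact (integral_symm _ _).trans (congrArg _ h.symm)

lemma surjective_integral_of_periodic_of_pos {g : ℝ → ℝ} {P : ℝ} (hg : Continuous g)
    (hpos : ∀ y, 0 < g y) (hper : Function.Periodic g P) (hP : 0 < P) :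
    Function.Surjective fun y => ∫ t in (0 : ℝ)..y, g t :=
  Continuous.surjective
    (continuous_primitive (fun _ _ => hg.intervalIntegrable _ _) 0)
    (hper.tendsto_atTop_intervalIntegral_of_pos' (hg.intervalIntegrable _ _) hpos hP)
    (hper.tendsto_atBot_intervalIntegral_of_pos' (hg.intervalIntegrable _ _) hpos hP)

/- Separation of variables: `φ` is the inverse of the travel time `y ↦ ∫ t in 0..y, 1 / v t`. -/
theorem exists_odd_solution_of_even_periodic_speed {v : ℝ → ℝ} {P : ℝ} (hv : Continuous v)
    (hpos : ∀ y, 0 < v y) (heven : v.Even) (hper : Function.Periodic v P) (hP : 0 < P) :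
    ∃ φ : ℝ → ℝ, (∀ x, HasDerivAt φ (v (φ x)) x) ∧ Function.Surjective φ ∧ φ.Odd ∧
      ∀ x, φ (x + ∫ t in (0 : ℝ)..P, (v t)⁻¹) = φ x + P := by
  have hcont : Continuous fun t => (v t)⁻¹ := hv.inv₀ fun t => (hpos t).ne'
  have hinv_pos : ∀ t, 0 < (v t)⁻¹ := fun t => inv_pos.2 (hpos t)
  have hinv_per : Function.Periodic (fun t => (v t)⁻¹) P := fun t => congrArg _ (hper t)
  let time : ℝ → ℝ := fun y => ∫ t in (0 : ℝ)..y, (v t)⁻¹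
  have time_deriv : ∀ y, HasDerivAt time (v y)⁻¹ y := fun y =>
    (hcont.integral_hasStrictDerivAt 0 y).hasDerivAt
  have time_odd : time.Odd := odd_integral_of_even (heven.left_comp Inv.inv)
  have time_add : ∀ y, time (y + P) = time y + time P := fun y => by
    simpa only [zero_add] using
      hinv_per.intervalIntegral_add_eq_add 0 y fun _ _ => hcont.intervalIntegrable _ _
  let e : ℝ ≃o ℝ := (strictMono_of_hasDerivAt_pos time_deriv hinv_pos).orderIsoOfSurjective time
    (surjective_integral_of_periodic_of_pos hcont hinv_pos hinv_per hP)
  have time_symm : ∀ x, time (e.symm x) = x := e.apply_symm_apply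
  refine ⟨e.symm, fun x => ?_, e.symm.surjective, fun x => ?_, fun x => ?_⟩
  · simpa only [inv_inv] using HasDerivAt.of_local_left_inverse
      e.symm.continuous.continuousAt (time_deriv (e.symm x)) (hinv_pos _).ne' (.of_forall time_symm)
  · exact (e.symm_apply_eq).2 ((time_odd _).trans (congrArg _ (time_symm x))).symm
  · exact (e.symm_apply_eq).2 ((time_add _).trans (congrArg (· + time P) (time_symm x))).symm

lemma contDiff_two_of_hasDerivAt_comp {ψ χ G : ℝ → ℝ} (hψ : ∀ x, HasDerivAt ψ (χ x) x)
    (hχ : ∀ x, HasDerivAt χ (G (ψ x)) x) (hG : Continuous G) : ContDiff ℝ 2 ψ := by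
  have hψ_cont : Continuous ψ := continuous_iff_continuousAt.2 fun x => (hψ x).continuousAt
  have hχ_smooth : ContDiff ℝ 1 χ := by
    rw [contDiff_one_iff_deriv, deriv_eq hχ]
    exact ⟨fun x => (hχ x).differentiableAt, hG.comp hψ_cont⟩
  rw [← one_add_one_eq_two, contDiff_succ_iff_deriv, deriv_eq hψ]
  exact ⟨fun x => (hψ x).differentiableAt, by simp, hχ_smooth⟩

end AutonomousEquation

/-- Jacobi's function `Δ(θ) = √(1 - k² sin² θ)` for the imaginary modulus `k = i q`. With this
modulus it is positive and smooth for every real `q`. -/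
noncomputable def delta (q θ : ℝ) : ℝ := √(1 + q ^ 2 * Real.sin θ ^ 2)

/-- The length `∫ θ in 0..2π, 1 / Δ(θ)` on which the amplitude gains `2π`. It is four times the
complete elliptic integral of the first kind for the modulus `i q`. -/
noncomputable def period (q : ℝ) : ℝ := ∫ θ in (0 : ℝ)..2 * π, (delta q θ)⁻¹

lemma delta_sq (q θ : ℝ) : delta q θ ^ 2 = 1 + q ^ 2 * Real.sin θ ^ 2 :=
  Real.sq_sqrt (by positivity)

lemma one_le_delta (q θ : ℝ) : 1 ≤ delta q θ :=
  Real.one_le_sqrt.2 (le_add_of_nonneg_right (by positivity))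

lemma delta_pos (q θ : ℝ) : 0 < delta q θ := one_pos.trans_le (one_le_delta q θ)

lemma delta_le_one_add_mul {q θ : ℝ} (hq : 0 ≤ q) (hθ : 0 ≤ θ) : delta q θ ≤ 1 + q * θ := by
  have hsin : Real.sin θ ^ 2 ≤ θ ^ 2 := sq_le_sq.2 Real.abs_sin_le_abs
  refine Real.sqrt_le_iff.2 ⟨by positivity, ?_⟩
  calc 1 + q ^ 2 * Real.sin θ ^ 2 ≤ 1 + q ^ 2 * θ ^ 2 := by gcongr
    _ ≤ (1 + q * θ) ^ 2 := by nlinarith [mul_nonneg hq hθ]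

lemma continuous_uncurry_delta : Continuous (Function.uncurry delta) := by
  unfold Function.uncurry delta
  fun_prop

lemma continuous_delta (q : ℝ) : Continuous (delta q) :=
  continuous_uncurry_delta.uncurry_left q

lemma continuous_inv_delta (q : ℝ) : Continuous fun θ => (delta q θ)⁻¹ :=
  (continuous_delta q).inv₀ fun θ => (delta_pos q θ).ne'

lemma even_delta (q : ℝ) : (delta q).Even := fun θ => by
  simp only [delta, Real.sin_neg, neg_sq]

lemma periodic_delta (q : ℝ) : Function.Periodic (delta q) (2 * π) := fun θ => by
  simp only [delta, Real.sin_add_two_pi]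

lemma hasDerivAt_delta (q θ : ℝ) :
    HasDerivAt (delta q) (q ^ 2 * Real.sin θ * Real.cos θ / delta q θ) θ := by
  have h : HasDerivAt (fun θ => 1 + q ^ 2 * Real.sin θ ^ 2)
      (q ^ 2 * (2 * Real.sin θ * Real.cos θ)) θ := by
    simpa using (((Real.hasDerivAt_sin θ).pow 2).const_mul (q ^ 2)).const_add 1
  refine (h.sqrt (by positivity)).congr_deriv ?_
  rw [← delta]
  have := (delta_pos q θ).ne'
  field_simp

lemma continuous_period : Continuous period :=
  continuous_parametric_intervalIntegral_of_continuous'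
    (continuous_uncurry_delta.inv₀ fun p => (delta_pos p.1 p.2).ne') _ _

lemma period_zero : period 0 = 2 * π := by simp [period, delta]

lemma period_pos (q : ℝ) : 0 < period q :=
  intervalIntegral_pos_of_pos ((continuous_inv_delta q).intervalIntegrable _ _)
    (fun θ => inv_pos.2 (delta_pos q θ)) Real.two_pi_pos

lemma period_le_two_pi (q : ℝ) : period q ≤ 2 * π :=
  calc period q ≤ ∫ _ in (0 : ℝ)..2 * π, (1 : ℝ) :=
        integral_mono_on Real.two_pi_pos.le ((continuous_inv_delta q).intervalIntegrable _ _)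
          intervalIntegrable_const fun θ _ => inv_le_one_of_one_le₀ (one_le_delta q θ)
    _ = 2 * π := by simp

lemma log_one_add_le_mul_period {q : ℝ} (hq : 0 < q) :
    Real.log (1 + q * (2 * π)) ≤ q * period q := by
  have hpos : ∀ θ ∈ Icc 0 (2 * π), 0 < 1 + q * θ := fun θ hθ => by
    have := mul_nonneg hq.le hθ.1
    positivity
  have hint : IntervalIntegrable (fun θ => (1 + q * θ)⁻¹) MeasureTheory.volume 0 (2 * π) := by
    refine ContinuousOn.intervalIntegrable_of_Icc Real.two_pi_pos.le ?_
    exact ContinuousOn.inv₀ (by fun_prop) fun θ hθ => (hpos θ hθ).ne'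
  calc Real.log (1 + q * (2 * π)) = q * ∫ θ in (0 : ℝ)..2 * π, (1 + q * θ)⁻¹ := by
        rw [mul_integral_comp_add_mul (f := fun x => x⁻¹),
          integral_inv_of_pos (by simp) (by positivity), mul_zero, add_zero, div_one]
    _ ≤ q * period q := by
        refine mul_le_mul_of_nonneg_left (integral_mono_on Real.two_pi_pos.le hint
          ((continuous_inv_delta q).intervalIntegrable _ _) fun θ hθ => ?_) hq.le
        exact inv_anti₀ (delta_pos q θ) (delta_le_one_add_mul hq.le hθ.1)

lemma tendsto_mul_period_atTop : Tendsto (fun q => q * period q) atTop atTop := by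
  have hlog : Tendsto (fun q : ℝ => Real.log (1 + q * (2 * π))) atTop atTop :=
    Real.tendsto_log_atTop.comp
      (tendsto_atTop_add_const_left _ _ (tendsto_id.atTop_mul_const Real.two_pi_pos))
  refine tendsto_atTop_mono' _ ?_ hlog
  filter_upwards [eventually_gt_atTop 0] with q hq using log_one_add_le_mul_period hq

theorem exists_modulus {m : ℝ} (hm : -(2 * π) ^ 2 < m) :
    ∃ q, q ≠ 0 ∧ (q ^ 2 - 1) * period q ^ 2 = m := by
  let f : ℝ → ℝ := fun q => (q ^ 2 - 1) * period q ^ 2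
  have hf_cont : Continuous f := by
    have := continuous_period
    fun_prop
  have hf_zero : f 0 = -(2 * π) ^ 2 := by simp [f, period_zero]
  have hf_top : Tendsto f atTop atTop := by
    refine tendsto_atTop_mono (fun q => ?_) (tendsto_atTop_add_const_right _ (-(2 * π) ^ 2)
      ((tendsto_pow_atTop two_ne_zero).comp tendsto_mul_period_atTop))
    have : period q ^ 2 ≤ (2 * π) ^ 2 :=
      pow_le_pow_left₀ (period_pos q).le (period_le_two_pi q) 2
    simp only [f, Function.comp_apply]
    linarith
  obtain ⟨q, hq⟩ := mem_range_of_exists_le_of_exists_ge hf_cont ⟨0, hf_zero.trans_le hm.le⟩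
    (hf_top.eventually_ge_atTop m).exists
  refine ⟨q, ?_, hq⟩
  rintro rfl
  exact hm.ne (hf_zero.symm.trans hq)

theorem exists_odd_amplitude (q : ℝ) {s : ℝ} (hs : 0 < s) :
    ∃ φ : ℝ → ℝ, (∀ x, HasDerivAt φ (s * delta q (φ x)) x) ∧ Function.Surjective φ ∧ φ.Odd ∧
      ∀ x, φ (x + period q / s) = φ x + 2 * π := by
  have h_time : ∫ θ in (0 : ℝ)..2 * π, (s * delta q θ)⁻¹ = period q / s := by
    simp only [mul_inv, integral_const_mul, period, div_eq_inv_mul]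
  rw [← h_time]
  exact exists_odd_solution_of_even_periodic_speed ((continuous_delta q).const_mul s)
    (fun θ => mul_pos hs (delta_pos q θ)) (fun θ => congrArg _ (even_delta q θ))
    (fun θ => congrArg _ (periodic_delta q θ)) Real.two_pi_pos

section Profile

variable {q s : ℝ} {φ : ℝ → ℝ} (hφ : ∀ x, HasDerivAt φ (s * delta q (φ x)) x)
include hφ

lemma hasDerivAt_mul_sin_amplitude (A x : ℝ) :
    HasDerivAt (fun x => A * Real.sin (φ x)) (A * (Real.cos (φ x) * (s * delta q (φ x)))) x :=
  (hφ x).sin.const_mul A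

lemma hasDerivAt_deriv_mul_sin_amplitude {A c : ℝ} (hA : c * A ^ 2 = 2 * (s * q) ^ 2) (x : ℝ) :
    HasDerivAt (fun x => A * (Real.cos (φ x) * (s * delta q (φ x))))
      (s ^ 2 * (q ^ 2 - 1) * (A * Real.sin (φ x)) - c * (A * Real.sin (φ x)) ^ 3) x := by
  have hΔ := ((hasDerivAt_delta q (φ x)).comp x (hφ x)).const_mul s
  refine (((hφ x).cos.mul hΔ).const_mul A).congr_deriv ?_
  have hΔ_ne := (delta_pos q (φ x)).ne'
  simp only [Function.comp_apply]
  field_simp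
  linear_combination A * Real.sin (φ x) ^ 3 * hA
    - s ^ 2 * A * Real.sin (φ x) * delta_sq q (φ x)
    + s ^ 2 * q ^ 2 * A * Real.sin (φ x) * Real.sin_sq_add_cos_sq (φ x)

theorem contDiff_and_deriv_deriv_mul_sin_amplitude {A c : ℝ} (hA : c * A ^ 2 = 2 * (s * q) ^ 2) :
    ContDiff ℝ 2 (fun x => A * Real.sin (φ x)) ∧
      ∀ x, deriv (deriv fun x => A * Real.sin (φ x)) x =
        s ^ 2 * (q ^ 2 - 1) * (A * Real.sin (φ x)) - c * (A * Real.sin (φ x)) ^ 3 := by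
  have hψ := hasDerivAt_mul_sin_amplitude hφ A
  have hχ := hasDerivAt_deriv_mul_sin_amplitude hφ hA
  refine ⟨contDiff_two_of_hasDerivAt_comp (G := fun y => s ^ 2 * (q ^ 2 - 1) * y - c * y ^ 3)
    hψ hχ (by fun_prop), fun x => ?_⟩
  rw [deriv_eq hψ, (hχ x).deriv]

end Profile

lemma not_constant_mul_sin_of_surjective {φ : ℝ → ℝ} (hφ : Function.Surjective φ) {A : ℝ}
    (hA : A ≠ 0) : ¬ ∃ a : ℝ, ∀ x : ℝ, A * Real.sin (φ x) = a := by
  rintro ⟨a, ha⟩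
  obtain ⟨x₀, hx₀⟩ := hφ 0
  obtain ⟨x₁, hx₁⟩ := hφ (π / 2)
  exact hA (by simpa [hx₀, hx₁] using (ha x₁).trans (ha x₀).symm)

lemma exists_nat_neg_lt_mul_div_sq (ω L : ℝ) {ε : ℝ} (hε : 0 < ε) :
    ∃ n : ℕ, 0 < n ∧ -ε < ω * (L / n) ^ 2 := by
  have h : Tendsto (fun n : ℕ => ω * (L / n) ^ 2) atTop (𝓝 0) := by
    simpa using ((tendsto_const_div_atTop_nhds_zero_nat L).pow 2).const_mul ω
  exact ((eventually_gt_atTop 0).and (h.eventually_const_lt (neg_neg_of_pos hε))).exists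

end Cnoidal

open Cnoidal in
theorem exists_odd_cnoidal_wave_general (L c ω : ℝ) (hL : 0 < L) (hc : 0 < c) :
    ∃ ψ : ℝ → ℝ,
      ContDiff ℝ 2 ψ
      ∧ (¬ ∃ a : ℝ, ∀ x : ℝ, ψ x = a)
      ∧ Function.Periodic ψ L
      ∧ (∀ x : ℝ, ψ (-x) = -ψ x)
      ∧ (∀ x : ℝ, -deriv (deriv ψ) x + ω * ψ x - c * (ψ x) ^ 3 = 0) := by
  obtain ⟨n, hn, hωn⟩ := exists_nat_neg_lt_mul_div_sq ω L (pow_pos Real.two_pi_pos 2)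
  obtain ⟨q, hq, hqω⟩ := exists_modulus hωn
  have hK := period_pos q
  obtain ⟨s, hs, hsL⟩ : ∃ s, 0 < s ∧ period q / s = L / n :=
    ⟨period q / (L / n), by positivity, div_div_cancel₀ hK.ne'⟩
  have hω : s ^ 2 * (q ^ 2 - 1) = ω := by
    rw [← hsL] at hqω
    field_simp at hqω
    linarith
  obtain ⟨φ, hφ, hφ_surj, hφ_odd, hφ_add⟩ := exists_odd_amplitude q hs
  obtain ⟨A, hA, hAc⟩ : ∃ A, A ≠ 0 ∧ c * A ^ 2 = 2 * (s * q) ^ 2 :=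
    ⟨√(2 / c) * (s * q), by positivity, by rw [mul_pow, Real.sq_sqrt (by positivity)]; field_simp⟩
  obtain ⟨hψ_smooth, hψ_deriv⟩ := contDiff_and_deriv_deriv_mul_sin_amplitude hφ hAc
  have hψ_per : Function.Periodic (fun x => A * Real.sin (φ x)) (L / n) := fun x => by
    simp only [← hsL, hφ_add, Real.sin_add_two_pi]
  refine ⟨fun x => A * Real.sin (φ x), hψ_smooth, not_constant_mul_sin_of_surjective hφ_surj hA,
    ?_, fun x => by simp only [hφ_odd.eq, Real.sin_neg, mul_neg], fun x => ?_⟩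
  · simpa only [mul_div_cancel₀ L (Nat.cast_ne_zero.2 hn.ne')] using hψ_per.nat_mul n
  · rw [hψ_deriv, hω]
    ring

/-- existence of (shifted) cnoidal-type waves: for `L > 0`, `c > 0`
and `ω > 0` there is a nonconstant, odd, `C²`, `L`-periodic solution of
`−ψ'' + ωψ − cψ³ = 0`. -/
theorem exists_odd_cnoidal_wave
    (L c ω : ℝ) (hL : 0 < L) (hc : 0 < c) (hω : 0 < ω) :
    ∃ ψ : ℝ → ℝ,
      ContDiff ℝ 2 ψ
      ∧ (¬ ∃ a : ℝ, ∀ x : ℝ, ψ x = a)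
      ∧ Function.Periodic ψ L
      ∧ (∀ x : ℝ, ψ (-x) = -ψ x)
      ∧ (∀ x : ℝ, -deriv (deriv ψ) x + ω * ψ x - c * (ψ x) ^ 3 = 0) :=
  exists_odd_cnoidal_wave_general L c ω hL hc
end

section
/- Define K(k) = ∫₀^{π/2} (1 − k² sin²θ)^{−1/2} dθ and E(k) = ∫₀^{π/2} (1 − k² sin²θ)^{1/2} dθ for k ∈ (0,1). Then the function k ↦ E(k)·K(k) is differentiable on (0,1) and its derivative is strictly positive for every k ∈ (0,1). -/
/-!
Both integrals belong to the family `M s k = ∫₀^{π/2} (1 - k² sin² θ)^s dθ`, with `E = M (1/2)` and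
`K = M (-1/2)`. Since `k ∂ₖ(1 - k² sin² θ) = 2 ((1 - k² sin² θ) - 1)`, differentiating under the
integral gives `k M s' = 2 s (M s - M (s - 1))`. Hence the terms in `E K` cancel in
`k (E K)' = M (1/2) M (-3/2) - M (-1/2) ^ 2`, and the right-hand side is positive by the strict
Cauchy–Schwarz inequality.
-/

open MeasureTheory Set Topology

theorem hasDerivAt_intervalIntegral_of_continuousOn {𝕜 E : Type*} [RCLike 𝕜]
    [NormedAddCommGroup E] [NormedSpace ℝ E] [NormedSpace 𝕜 E]
    {μ : Measure ℝ} [IsLocallyFiniteMeasure μ] {a b : ℝ} {U : Set 𝕜} {F F' : 𝕜 → ℝ → E} {x₀ : 𝕜}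
    (hU : U ∈ 𝓝 x₀)
    (hF : ∀ x ∈ U, ContinuousOn (F x) (uIcc a b))
    (hF' : ContinuousOn (fun p : 𝕜 × ℝ ↦ F' p.1 p.2) (U ×ˢ uIcc a b))
    (hderiv : ∀ x ∈ U, ∀ t ∈ uIcc a b, HasDerivAt (F · t) (F' x t) x) :
    HasDerivAt (fun x ↦ ∫ t in a..b, F x t ∂μ) (∫ t in a..b, F' x₀ t ∂μ) x₀ := by
  obtain ⟨V, hV, hVU, hVcompact⟩ := local_compact_nhds hU
  obtain ⟨C, hC⟩ := (hVcompact.prod isCompact_uIcc).exists_bound_of_continuousOn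
    (hF'.mono (prod_mono_left hVU))
  have hF'x₀ : ContinuousOn (F' x₀) (uIcc a b) :=
    hF'.comp (f := fun t ↦ (x₀, t)) (by fun_prop) fun _ ht ↦ ⟨mem_of_mem_nhds hU, ht⟩
  refine (intervalIntegral.hasDerivAt_integral_of_dominated_loc_of_deriv_le
    (bound := fun _ ↦ C) hV ?_ (hF x₀ (mem_of_mem_nhds hU)).intervalIntegrable
    hF'x₀.intervalIntegrable.def'.aestronglyMeasurable ?_ intervalIntegrable_const ?_).2
  · filter_upwards [hU] with x hx
    exact (hF x hx).intervalIntegrable.def'.aestronglyMeasurable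
  · exact .of_forall fun t ht x hx ↦ hC (x, t) ⟨hx, uIoc_subset_uIcc ht⟩
  · exact .of_forall fun t ht x hx ↦ hderiv x (hVU hx) t (uIoc_subset_uIcc ht)

theorem intervalIntegral_sq_mul_sub_mul {μ : Measure ℝ} [IsLocallyFiniteMeasure μ]
    {a b : ℝ} {f g : ℝ → ℝ}
    (hf : ContinuousOn f (uIcc a b)) (hg : ContinuousOn g (uIcc a b)) (c d : ℝ) :
    ∫ t in a..b, (c * f t - d * g t) ^ 2 ∂μ =
      c ^ 2 * (∫ t in a..b, f t ^ 2 ∂μ) - 2 * c * d * (∫ t in a..b, f t * g t ∂μ) +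
        d ^ 2 * ∫ t in a..b, g t ^ 2 ∂μ := by
  have hff : IntervalIntegrable (fun t ↦ c ^ 2 * f t ^ 2) μ a b :=
    ContinuousOn.intervalIntegrable (by fun_prop)
  have hfg : IntervalIntegrable (fun t ↦ 2 * c * d * (f t * g t)) μ a b :=
    ContinuousOn.intervalIntegrable (by fun_prop)
  have hgg : IntervalIntegrable (fun t ↦ d ^ 2 * g t ^ 2) μ a b :=
    ContinuousOn.intervalIntegrable (by fun_prop)
  simp only [← intervalIntegral.integral_const_mul]
  rw [← intervalIntegral.integral_sub hff hfg, ← intervalIntegral.integral_add (hff.sub hfg) hgg]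
  congr! 2 with t
  ring

theorem sq_intervalIntegral_mul_lt {a b : ℝ} (hab : a < b) {f g : ℝ → ℝ}
    (hf : ContinuousOn f (Icc a b)) (hg : ContinuousOn g (Icc a b))
    {x y : ℝ} (hx : x ∈ Icc a b) (hy : y ∈ Icc a b) (hfg : f x * g y ≠ f y * g x) :
    (∫ t in a..b, f t * g t) ^ 2 < (∫ t in a..b, f t ^ 2) * ∫ t in a..b, g t ^ 2 := by
  set A := ∫ t in a..b, f t ^ 2
  set B := ∫ t in a..b, g t ^ 2
  set C := ∫ t in a..b, f t * g t
  have hB : 0 < B := by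
    refine intervalIntegral.integral_pos hab (hg.pow 2) (fun t _ ↦ sq_nonneg (g t)) ?_
    by_contra! h
    have hgx : g x = 0 := by simpa using h x hx
    have hgy : g y = 0 := by simpa using h y hy
    exact hfg (by rw [hgx, hgy, mul_zero, mul_zero])
  -- `B f - C g` is `B` times the component of `f` orthogonal to `g` in `L²(a, b)`.
  have hpos : 0 < ∫ t in a..b, (B * f t - C * g t) ^ 2 := by
    refine intervalIntegral.integral_pos hab (by fun_prop) (fun t _ ↦ sq_nonneg _) ?_
    by_contra! h
    have hzero : ∀ t ∈ Icc a b, B * f t = C * g t := fun t ht ↦ by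
      simpa [sub_eq_zero] using h t ht
    refine hfg (mul_left_cancel₀ hB.ne' ?_)
    linear_combination g y * hzero x hx - g x * hzero y hy
  have hexpand : ∫ t in a..b, (B * f t - C * g t) ^ 2 = B * (A * B - C ^ 2) := by
    rw [← uIcc_of_le hab.le] at hf hg
    rw [intervalIntegral_sq_mul_sub_mul hf hg]
    ring
  rw [hexpand] at hpos
  exact sub_pos.mp (pos_of_mul_pos_right hpos hB.le)

/-- The square of Legendre's `Δ(θ, k)`, the radicand of the complete elliptic integrals. -/
noncomputable def legendreDeltaSq (k θ : ℝ) : ℝ := 1 - k ^ 2 * Real.sin θ ^ 2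

/-- The power moments `∫₀^{π/2} Δ(θ, k)^{2s} dθ`, interpolating between the complete elliptic
integrals of the second kind (`s = 1/2`) and of the first kind (`s = -1/2`). -/
noncomputable def ellipticMoment (s k : ℝ) : ℝ :=
  ∫ θ in (0 : ℝ)..(Real.pi / 2), legendreDeltaSq k θ ^ s

theorem ellipticMoment_one_half (k : ℝ) :
    ellipticMoment (1 / 2) k =
      ∫ θ in (0 : ℝ)..(Real.pi / 2), Real.sqrt (1 - k ^ 2 * Real.sin θ ^ 2) := by
  simp only [ellipticMoment, legendreDeltaSq, Real.sqrt_eq_rpow]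

theorem ellipticMoment_neg_one_half (k : ℝ) :
    ellipticMoment (-(1 / 2)) k =
      ∫ θ in (0 : ℝ)..(Real.pi / 2), 1 / Real.sqrt (1 - k ^ 2 * Real.sin θ ^ 2) := by
  have hsqrt (x : ℝ) : x ^ (-(1 / 2) : ℝ) = 1 / Real.sqrt x := by
    rw [Real.rpow_neg_eq_inv_rpow, ← Real.sqrt_eq_rpow, Real.sqrt_inv, one_div]
  simp only [ellipticMoment, legendreDeltaSq, hsqrt]

theorem continuous_uncurry_legendreDeltaSq :
    Continuous fun p : ℝ × ℝ ↦ legendreDeltaSq p.1 p.2 := by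
  unfold legendreDeltaSq
  fun_prop

theorem hasDerivAt_legendreDeltaSq (k θ : ℝ) :
    HasDerivAt (legendreDeltaSq · θ) (-(2 * k * Real.sin θ ^ 2)) k := by
  simpa [legendreDeltaSq] using
    (((hasDerivAt_id k).pow 2).mul_const (Real.sin θ ^ 2)).const_sub 1

section

variable {k : ℝ} (hk : |k| < 1)

include hk

theorem legendreDeltaSq_pos (θ : ℝ) : 0 < legendreDeltaSq k θ := by
  have hk2 : k ^ 2 < 1 := (sq_lt_one_iff_abs_lt_one k).mpr hk
  have hsin : k ^ 2 * Real.sin θ ^ 2 ≤ k ^ 2 :=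
    mul_le_of_le_one_right (sq_nonneg k) (Real.sin_sq_le_one θ)
  exact sub_pos.mpr (hsin.trans_lt hk2)

theorem continuous_legendreDeltaSq_rpow (s : ℝ) : Continuous fun θ ↦ legendreDeltaSq k θ ^ s :=
  (continuous_uncurry_legendreDeltaSq.comp (Continuous.prodMk_right k)).rpow_const
    fun θ ↦ .inl (legendreDeltaSq_pos hk θ).ne'

theorem hasDerivAt_legendreDeltaSq_rpow (s θ : ℝ) :
    HasDerivAt (legendreDeltaSq · θ ^ s)
      (-(2 * k * Real.sin θ ^ 2) * s * legendreDeltaSq k θ ^ (s - 1)) k :=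
  (hasDerivAt_legendreDeltaSq k θ).rpow_const (.inl (legendreDeltaSq_pos hk θ).ne')

theorem hasDerivAt_ellipticMoment_integral (s : ℝ) :
    HasDerivAt (ellipticMoment s)
      (∫ θ in (0 : ℝ)..(Real.pi / 2),
        -(2 * k * Real.sin θ ^ 2) * s * legendreDeltaSq k θ ^ (s - 1)) k := by
  have hU : {x : ℝ | |x| < 1} ∈ 𝓝 k := (isOpen_lt continuous_abs continuous_const).mem_nhds hk
  refine hasDerivAt_intervalIntegral_of_continuousOn hU
    (fun x hx ↦ (continuous_legendreDeltaSq_rpow hx s).continuousOn) ?_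
    (fun x hx θ _ ↦ hasDerivAt_legendreDeltaSq_rpow hx s θ)
  exact ContinuousOn.mul (by fun_prop) <| continuous_uncurry_legendreDeltaSq.continuousOn.rpow_const
    fun p hp ↦ .inl (legendreDeltaSq_pos hp.1 p.2).ne'

theorem hasDerivAt_ellipticMoment (hk₀ : k ≠ 0) (s : ℝ) :
    HasDerivAt (ellipticMoment s)
      (2 * s / k * (ellipticMoment s k - ellipticMoment (s - 1) k)) k := by
  convert hasDerivAt_ellipticMoment_integral hk s using 1
  rw [ellipticMoment, ellipticMoment, ← intervalIntegral.integral_sub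
    ((continuous_legendreDeltaSq_rpow hk s).intervalIntegrable _ _)
    ((continuous_legendreDeltaSq_rpow hk (s - 1)).intervalIntegrable _ _),
    ← intervalIntegral.integral_const_mul]
  refine intervalIntegral.integral_congr fun θ _ ↦ ?_
  have hrpow : legendreDeltaSq k θ ^ s = legendreDeltaSq k θ ^ (s - 1) * legendreDeltaSq k θ := by
    rw [← Real.rpow_add_one (legendreDeltaSq_pos hk θ).ne', sub_add_cancel]
  have hsin : legendreDeltaSq k θ - 1 = -(k ^ 2 * Real.sin θ ^ 2) := by
    rw [legendreDeltaSq]; ring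
  calc
    2 * s / k * (legendreDeltaSq k θ ^ s - legendreDeltaSq k θ ^ (s - 1))
      = 2 * s / k * ((legendreDeltaSq k θ - 1) * legendreDeltaSq k θ ^ (s - 1)) := by
        rw [hrpow]; ring
    _ = -(2 * k * Real.sin θ ^ 2) * s * legendreDeltaSq k θ ^ (s - 1) := by
        rw [hsin]; field_simp

theorem sq_ellipticMoment_midpoint_lt (hk₀ : k ≠ 0) {p q : ℝ} (hpq : p ≠ q) :
    ellipticMoment ((p + q) / 2) k ^ 2 < ellipticMoment p k * ellipticMoment q k := by
  have hpos := legendreDeltaSq_pos hk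
  have hpi : 0 < Real.pi / 2 := Real.pi_div_two_pos
  have hzero : legendreDeltaSq k 0 = 1 := by simp [legendreDeltaSq]
  have hend : legendreDeltaSq k (Real.pi / 2) ≠ 1 := by simpa [legendreDeltaSq] using hk₀
  have hnonprop : legendreDeltaSq k 0 ^ (p / 2) * legendreDeltaSq k (Real.pi / 2) ^ (q / 2) ≠
      legendreDeltaSq k (Real.pi / 2) ^ (p / 2) * legendreDeltaSq k 0 ^ (q / 2) := by
    rw [hzero, Real.one_rpow, Real.one_rpow, one_mul, mul_one, Ne,
      Real.rpow_right_inj (hpos _) hend]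
    exact fun h ↦ hpq (by linarith)
  have hsq (s θ : ℝ) : (legendreDeltaSq k θ ^ (s / 2)) ^ 2 = legendreDeltaSq k θ ^ s := by
    rw [← Real.rpow_mul_natCast (hpos θ).le, Nat.cast_ofNat, div_mul_cancel₀ s two_ne_zero]
  have hmul (θ : ℝ) : legendreDeltaSq k θ ^ (p / 2) * legendreDeltaSq k θ ^ (q / 2) =
      legendreDeltaSq k θ ^ ((p + q) / 2) := by
    rw [← Real.rpow_add (hpos θ), add_div]
  simpa only [hsq, hmul, ellipticMoment] using sq_intervalIntegral_mul_lt hpi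
    (continuous_legendreDeltaSq_rpow hk (p / 2)).continuousOn
    (continuous_legendreDeltaSq_rpow hk (q / 2)).continuousOn
    (left_mem_Icc.mpr hpi.le) (right_mem_Icc.mpr hpi.le) hnonprop

theorem hasDerivAt_ellipticMoment_one_half_mul_neg_one_half (hk₀ : k ≠ 0) :
    HasDerivAt (fun x ↦ ellipticMoment (1 / 2) x * ellipticMoment (-(1 / 2)) x)
      ((ellipticMoment (1 / 2) k * ellipticMoment (-(3 / 2)) k -
        ellipticMoment (-(1 / 2)) k ^ 2) / k) k := by
  have hE := hasDerivAt_ellipticMoment hk hk₀ (1 / 2)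
  have hK := hasDerivAt_ellipticMoment hk hk₀ (-(1 / 2))
  rw [show (1 / 2 - 1 : ℝ) = -(1 / 2) by norm_num] at hE
  rw [show (-(1 / 2) - 1 : ℝ) = -(3 / 2) by norm_num] at hK
  exact (hE.fun_mul hK).congr_deriv (by ring)

end

/-- `k ↦ E(k)K(k)` is differentiable on `(0,1)` with strictly positive
derivative, where `K`, `E` are the complete elliptic integrals of the first and
second kind. -/
theorem EK_strict_derivative_pos
    (K E : ℝ → ℝ)
    (hK : ∀ k : ℝ, K k = ∫ θ in (0:ℝ)..(Real.pi / 2),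
      1 / Real.sqrt (1 - k ^ 2 * Real.sin θ ^ 2))
    (hE : ∀ k : ℝ, E k = ∫ θ in (0:ℝ)..(Real.pi / 2),
      Real.sqrt (1 - k ^ 2 * Real.sin θ ^ 2)) :
    ∀ k ∈ Set.Ioo (0:ℝ) 1,
      DifferentiableAt ℝ (fun k => E k * K k) k
      ∧ 0 < deriv (fun k => E k * K k) k := by
  rintro k ⟨hk₀, hk₁⟩
  have hk : |k| < 1 := by rwa [abs_of_pos hk₀]
  simp only [hE, hK, ← ellipticMoment_one_half, ← ellipticMoment_neg_one_half]
  have hderiv := hasDerivAt_ellipticMoment_one_half_mul_neg_one_half hk hk₀.ne'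
  have hlt : ellipticMoment (-(1 / 2)) k ^ 2 <
      ellipticMoment (1 / 2) k * ellipticMoment (-(3 / 2)) k := by
    convert sq_ellipticMoment_midpoint_lt hk hk₀.ne' (p := 1 / 2) (q := -(3 / 2)) (by norm_num)
      using 3
    norm_num
  exact ⟨hderiv.differentiableAt, hderiv.deriv ▸ div_pos (sub_pos.mpr hlt) hk₀⟩
end

section
/- Define K(k) = ∫₀^{π/2} (1 − k² sin²θ)^{−1/2} dθ and E(k) = ∫₀^{π/2} (1 − k² sin²θ)^{1/2} dθ for k ∈ (0,1). Then the function k ↦ K(k)·(E(k) − (1 − k²)K(k)) is differentiable on (0,1) and its derivative is strictly positive for every k ∈ (0,1). -/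
/-!
Since `Δ² - (1 - k²) = k² cos² θ` for `Δ = √(1 - k² sin² θ)`, the second factor is
`E(k) - (1 - k²) K(k) = k² ∫ cos² θ / Δ`. The function is therefore `k²` times `∫ 1 / Δ` times
`∫ cos² θ / Δ`. Both integrals are positive and nondecreasing in `k > 0` because `1 / Δ` is, and the
factor `k²` makes the derivative strictly positive.
-/

open Real Set Topology MeasureTheory

/-- Jacobi's delta amplitude `Δ = √(1 - k² sin² θ)`, the common denominator of the elliptic
integrals; the modulus `k` comes first. -/
noncomputable def ellipticDelta (k θ : ℝ) : ℝ := √(1 - k ^ 2 * sin θ ^ 2)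

/-- The elliptic integral of the first kind over `[a, b]` with weight `w`. On `[0, π / 2]`, the
weight `1` gives `K(k)` and the weight `cos²` gives the associated complete integral
`B(k) = (E(k) - (1 - k²) K(k)) / k²`. -/
noncomputable def weightedEllipticIntegral (w : ℝ → ℝ) (a b k : ℝ) : ℝ :=
  ∫ θ in a..b, w θ / ellipticDelta k θ

section Delta

variable {k : ℝ}

lemma sqrt_one_sub_sq_le_ellipticDelta {m : ℝ} (hkm : |k| ≤ m) (θ : ℝ) :
    √(1 - m ^ 2) ≤ ellipticDelta k θ := by
  have hsq : k ^ 2 ≤ m ^ 2 := sq_le_sq' (abs_le.1 hkm).1 (abs_le.1 hkm).2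
  have hsin : k ^ 2 * sin θ ^ 2 ≤ k ^ 2 :=
    mul_le_of_le_one_right (sq_nonneg k) (sin_sq_le_one θ)
  exact sqrt_le_sqrt (by linarith)

lemma ellipticDelta_pos (hk : |k| < 1) (θ : ℝ) : 0 < ellipticDelta k θ := by
  have hpos : 0 < √(1 - |k| ^ 2) :=
    sqrt_pos.2 (sub_pos.2 (pow_lt_one₀ (abs_nonneg k) hk two_ne_zero))
  exact hpos.trans_le (sqrt_one_sub_sq_le_ellipticDelta le_rfl θ)

lemma ellipticDelta_sq (hk : |k| < 1) (θ : ℝ) :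
    ellipticDelta k θ ^ 2 = 1 - k ^ 2 * sin θ ^ 2 :=
  sq_sqrt (sqrt_pos.1 (ellipticDelta_pos hk θ)).le

lemma continuous_ellipticDelta (k : ℝ) : Continuous (ellipticDelta k) := by
  unfold ellipticDelta
  fun_prop

lemma ellipticDelta_sub_div_ellipticDelta (hk : |k| < 1) (θ : ℝ) :
    ellipticDelta k θ - (1 - k ^ 2) * (1 / ellipticDelta k θ) =
      k ^ 2 * (cos θ ^ 2 / ellipticDelta k θ) := by
  have hΔ := (ellipticDelta_pos hk θ).ne'
  field_simp
  rw [ellipticDelta_sq hk, cos_sq']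
  ring

lemma hasDerivAt_ellipticDelta (hk : |k| < 1) (θ : ℝ) :
    HasDerivAt (ellipticDelta · θ) (-(k * sin θ ^ 2) / ellipticDelta k θ) k := by
  have hradicand : HasDerivAt (fun x ↦ 1 - x ^ 2 * sin θ ^ 2) (-(2 * k * sin θ ^ 2)) k := by
    simpa using ((hasDerivAt_pow 2 k).mul_const (sin θ ^ 2)).const_sub 1
  refine (hradicand.sqrt (sqrt_pos.1 (ellipticDelta_pos hk θ)).ne').congr_deriv ?_
  rw [← ellipticDelta, mul_assoc, ← mul_neg, mul_div_mul_left _ _ two_ne_zero]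

lemma hasDerivAt_one_div_ellipticDelta (hk : |k| < 1) (θ : ℝ) :
    HasDerivAt (fun x ↦ 1 / ellipticDelta x θ) (k * sin θ ^ 2 / ellipticDelta k θ ^ 3) k := by
  have hΔ := (ellipticDelta_pos hk θ).ne'
  simp only [one_div]
  refine ((hasDerivAt_ellipticDelta hk θ).fun_inv hΔ).congr_deriv ?_
  field_simp

lemma abs_mul_sin_sq_div_ellipticDelta_pow_le {m : ℝ} (hkm : |k| ≤ m) (hm : m < 1)
    (θ : ℝ) (n : ℕ) : |k * sin θ ^ 2 / ellipticDelta k θ ^ n| ≤ 1 / √(1 - m ^ 2) ^ n := by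
  have hm_pos : 0 < √(1 - m ^ 2) :=
    sqrt_pos.2 (sub_pos.2 (pow_lt_one₀ ((abs_nonneg k).trans hkm) hm two_ne_zero))
  have hnum : |k * sin θ ^ 2| ≤ 1 := by
    rw [abs_mul, abs_of_nonneg (sq_nonneg (sin θ))]
    exact mul_le_one₀ (hkm.trans hm.le) (sq_nonneg _) (sin_sq_le_one θ)
  have hΔ := ellipticDelta_pos (hkm.trans_lt hm) θ
  rw [abs_div, abs_of_pos (pow_pos hΔ n)]
  gcongr
  exact sqrt_one_sub_sq_le_ellipticDelta hkm θ

end Delta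

section WeightedIntegral

variable {w : ℝ → ℝ} {a b k : ℝ}

lemma intervalIntegrable_div_ellipticDelta_pow (hw : IntervalIntegrable w volume a b)
    (hk : |k| < 1) (n : ℕ) :
    IntervalIntegrable (fun θ ↦ w θ / ellipticDelta k θ ^ n) volume a b := by
  simp only [div_eq_mul_inv]
  exact hw.mul_continuousOn (((continuous_ellipticDelta k).pow n).inv₀
    fun θ ↦ (pow_pos (ellipticDelta_pos hk θ) n).ne').continuousOn

lemma intervalIntegrable_div_ellipticDelta (hw : IntervalIntegrable w volume a b)
    (hk : |k| < 1) : IntervalIntegrable (fun θ ↦ w θ / ellipticDelta k θ) volume a b := by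
  simpa only [pow_one] using intervalIntegrable_div_ellipticDelta_pow hw hk 1

lemma weightedEllipticIntegral_pos (hab : a < b) (hw : IntervalIntegrable w volume a b)
    (hw_pos : ∀ θ ∈ Ioo a b, 0 < w θ) (hk : |k| < 1) : 0 < weightedEllipticIntegral w a b k :=
  intervalIntegral.intervalIntegral_pos_of_pos_on (intervalIntegrable_div_ellipticDelta hw hk)
    (fun θ hθ ↦ div_pos (hw_pos θ hθ) (ellipticDelta_pos hk θ)) hab

lemma hasDerivAt_weightedEllipticIntegral (hw : IntervalIntegrable w volume a b)
    (hk : |k| < 1) :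
    HasDerivAt (weightedEllipticIntegral w a b)
      (∫ θ in a..b, w θ * (k * sin θ ^ 2 / ellipticDelta k θ ^ 3)) k := by
  obtain ⟨m, hkm, hm⟩ := exists_between hk
  have hnhds : {x : ℝ | |x| < m} ∈ 𝓝 k :=
    (isOpen_lt continuous_abs continuous_const).mem_nhds hkm
  have hderiv_int : IntervalIntegrable
      (fun θ ↦ w θ * (k * sin θ ^ 2 / ellipticDelta k θ ^ 3)) volume a b := by
    simpa only [← mul_div_assoc] using intervalIntegrable_div_ellipticDelta_pow
      (hw.mul_continuousOn (g := fun θ ↦ k * sin θ ^ 2) (by fun_prop)) hk 3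
  refine (intervalIntegral.hasDerivAt_integral_of_dominated_loc_of_deriv_le
    (F := fun x θ ↦ w θ / ellipticDelta x θ)
    (F' := fun x θ ↦ w θ * (x * sin θ ^ 2 / ellipticDelta x θ ^ 3))
    (bound := fun θ ↦ ‖w θ‖ * (1 / √(1 - m ^ 2) ^ 3)) hnhds ?_
    (intervalIntegrable_div_ellipticDelta hw hk) hderiv_int.aestronglyMeasurable_restrict_uIoc
    ?_ (hw.norm.mul_const _) ?_).2
  · filter_upwards [hnhds] with x hx
    exact (intervalIntegrable_div_ellipticDelta hw (hx.trans hm)).aestronglyMeasurable_restrict_uIoc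
  · refine ae_of_all _ fun θ _ x hx ↦ ?_
    rw [norm_mul]
    exact mul_le_mul_of_nonneg_left
      (abs_mul_sin_sq_div_ellipticDelta_pow_le (le_of_lt hx) hm θ 3) (norm_nonneg _)
  · refine ae_of_all _ fun θ _ x hx ↦ ?_
    simpa only [mul_one_div] using
      (hasDerivAt_one_div_ellipticDelta (lt_trans hx hm) θ).const_mul (w θ)

lemma deriv_weightedEllipticIntegral_nonneg (hab : a ≤ b) (hw : IntervalIntegrable w volume a b)
    (hw_nonneg : ∀ θ ∈ Ioo a b, 0 ≤ w θ) (hk₀ : 0 ≤ k) (hk : |k| < 1) :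
    0 ≤ deriv (weightedEllipticIntegral w a b) k := by
  rw [(hasDerivAt_weightedEllipticIntegral hw hk).deriv, intervalIntegral.integral_of_le hab,
    integral_Ioc_eq_integral_Ioo]
  refine setIntegral_nonneg measurableSet_Ioo fun θ hθ ↦ mul_nonneg (hw_nonneg θ hθ) ?_
  have hΔ := ellipticDelta_pos hk θ
  positivity

lemma deriv_sq_mul_weightedEllipticIntegral_mul_pos {v : ℝ → ℝ} (hab : a < b)
    (hv : IntervalIntegrable v volume a b) (hv_pos : ∀ θ ∈ Ioo a b, 0 < v θ)
    (hw : IntervalIntegrable w volume a b) (hw_pos : ∀ θ ∈ Ioo a b, 0 < w θ)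
    (hk₀ : 0 < k) (hk : |k| < 1) :
    0 < deriv (fun x ↦ x ^ 2 *
      (weightedEllipticIntegral v a b x * weightedEllipticIntegral w a b x)) k := by
  have hv_diff := (hasDerivAt_weightedEllipticIntegral hv hk).differentiableAt
  have hw_diff := (hasDerivAt_weightedEllipticIntegral hw hk).differentiableAt
  have hv_int_pos := weightedEllipticIntegral_pos hab hv hv_pos hk
  have hw_int_pos := weightedEllipticIntegral_pos hab hw hw_pos hk
  have hv_deriv_nonneg :=
    deriv_weightedEllipticIntegral_nonneg hab.le hv (fun θ hθ ↦ (hv_pos θ hθ).le) hk₀.le hk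
  have hw_deriv_nonneg :=
    deriv_weightedEllipticIntegral_nonneg hab.le hw (fun θ hθ ↦ (hw_pos θ hθ).le) hk₀.le hk
  rw [((hasDerivAt_pow 2 k).fun_mul (hv_diff.hasDerivAt.fun_mul hw_diff.hasDerivAt)).deriv]
  positivity

lemma integral_ellipticDelta_sub_weightedEllipticIntegral_one (hk : |k| < 1) :
    (∫ θ in a..b, ellipticDelta k θ) - (1 - k ^ 2) * weightedEllipticIntegral (fun _ ↦ 1) a b k =
      k ^ 2 * weightedEllipticIntegral (cos · ^ 2) a b k := by
  have hone : IntervalIntegrable (fun θ ↦ 1 / ellipticDelta k θ) volume a b :=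
    intervalIntegrable_div_ellipticDelta intervalIntegrable_const hk
  simp only [weightedEllipticIntegral, ← intervalIntegral.integral_const_mul]
  rw [← intervalIntegral.integral_sub ((continuous_ellipticDelta k).intervalIntegrable a b)
    (hone.const_mul _)]
  exact intervalIntegral.integral_congr fun θ _ ↦ ellipticDelta_sub_div_ellipticDelta hk θ

end WeightedIntegral

/-- `k ↦ K(k)(E(k) − (1−k²)K(k))` is differentiable on `(0,1)` with
strictly positive derivative, where `K`, `E` are the complete elliptic integrals of
the first and second kind. -/
theorem cnoidal_norm_derivative_pos
    (K E : ℝ → ℝ)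
    (hK : ∀ k : ℝ, K k = ∫ θ in (0:ℝ)..(Real.pi / 2),
      1 / Real.sqrt (1 - k ^ 2 * Real.sin θ ^ 2))
    (hE : ∀ k : ℝ, E k = ∫ θ in (0:ℝ)..(Real.pi / 2),
      Real.sqrt (1 - k ^ 2 * Real.sin θ ^ 2)) :
    ∀ k ∈ Set.Ioo (0:ℝ) 1,
      DifferentiableAt ℝ (fun k => K k * (E k - (1 - k ^ 2) * K k)) k
      ∧ 0 < deriv (fun k => K k * (E k - (1 - k ^ 2) * K k)) k := by
  rintro k ⟨hk₀, hk₁⟩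
  suffices hpos : 0 < deriv (fun k ↦ K k * (E k - (1 - k ^ 2) * K k)) k from
    ⟨differentiableAt_of_deriv_ne_zero hpos.ne', hpos⟩
  let B := weightedEllipticIntegral (cos · ^ 2) 0 (π / 2)
  have hK_eq : K = weightedEllipticIntegral (fun _ ↦ 1) 0 (π / 2) := funext hK
  have hfactor : (fun x ↦ K x * (E x - (1 - x ^ 2) * K x)) =ᶠ[𝓝 k]
      fun x ↦ x ^ 2 * (K x * B x) := by
    filter_upwards [Ioo_mem_nhds (neg_one_lt_zero.trans hk₀) hk₁] with x hx
    have hB : E x - (1 - x ^ 2) * K x = x ^ 2 * B x := by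
      rw [hE, hK_eq]
      exact integral_ellipticDelta_sub_weightedEllipticIntegral_one (abs_lt.2 hx)
    rw [hB, mul_left_comm]
  rw [hfactor.deriv_eq, hK_eq]
  exact deriv_sq_mul_weightedEllipticIntegral_mul_pos pi_div_two_pos
    intervalIntegrable_const (fun _ _ ↦ one_pos)
    ((continuous_cos.pow 2).intervalIntegrable _ _)
    (fun θ hθ ↦ pow_pos (cos_pos_of_mem_Ioo ⟨by linarith [hθ.1, pi_pos], hθ.2⟩) 2)
    hk₀ (abs_lt.2 ⟨neg_one_lt_zero.trans hk₀, hk₁⟩)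
end
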